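/- For every natural number m, the polynomials P = y^{m+1} − z·x^m, Q = z^{m+1} − x·y^m, R = x^{m+1} − y·z^m in ℂ[x, y, z] satisfy the identity P·(∂R/∂y − ∂Q/∂z) + Q·(∂P/∂z − ∂R/∂x) + R·(∂Q/∂x − ∂P/∂y) = 0. -/

import Mathlib

open MvPolynomial

/-- Integrability `ω ∧ dω = 0` of the Jouanolou 1-form
`ω = (y^{m+1} − z·x^m)dx + (z^{m+1} − x·y^m)dy + (x^{m+1} − y·z^m)dz`, where the
variables `x, y, z` are `X 0, X 1, X 2` in `ℂ[x, y, z] = MvPolynomial (Fin 3) ℂ`. -/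
theorem stmt13 (m : ℕ) (P Q R : MvPolynomial (Fin 3) ℂ)
    (hP : P = X 1 ^ (m + 1) - X 2 * X 0 ^ m)
    (hQ : Q = X 2 ^ (m + 1) - X 0 * X 1 ^ m)
    (hR : R = X 0 ^ (m + 1) - X 1 * X 2 ^ m) :
    P * (pderiv 1 R - pderiv 2 Q) + Q * (pderiv 2 P - pderiv 0 R)
      + R * (pderiv 0 Q - pderiv 1 P) = 0 := by
  have h01 : (0 : Fin 3) ≠ 1 := by decide
  have h02 : (0 : Fin 3) ≠ 2 := by decide
  have h12 : (1 : Fin 3) ≠ 2 := by decide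
  subst hP hQ hR
  simp only [map_sub, Derivation.leibniz, Derivation.leibniz_pow, pderiv_X_self,
    pderiv_X_of_ne h01, pderiv_X_of_ne h02, pderiv_X_of_ne h12,
    pderiv_X_of_ne h01.symm, pderiv_X_of_ne h02.symm, pderiv_X_of_ne h12.symm,
    smul_eq_mul, nsmul_eq_mul, Nat.add_sub_cancel]
  push_cast
  ring
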